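/- (Alternating paths decrease matching deficiency.) Let G = (L, R, E) be a finite bipartite graph, let U ⊆ L, let q ≥ 1 be an integer, and let M ⊆ E be a matching such that every vertex of U is incident to at most q edges of M. Suppose there exists an alternating path P = (v₁, u₁, v₂, u₂, …, v_m, u_m) with all vertices distinct, where for every i ∈ [m]: v_i ∈ R, u_i ∈ U, and {v_i, u_i} ∈ E \ M; for every i ∈ [m−1]: {u_i, v_{i+1}} ∈ M; the vertex v₁ is free (incident to no edge of M); and def_M(u_m) > 0. Then there exists a matching M' with def(M') = def(M) − 1, where for i ∈ U, def_M(i) = max(0, q − |{ j ∈ R : {i,j} ∈ M }|) and def(M) = Σ_{i ∈ U} def_M(i). -/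

import Mathlib

open Finset

/-- `M` is a matching: every right vertex is incident to at most one edge. -/
def IsMatching {L R : Type*} (M : Finset (L × R)) : Prop :=
  ∀ j : R, ∀ i i' : L, (i, j) ∈ M → (i', j) ∈ M → i = i'

/-- `N_M(i)`: the right vertices matched to `i` by `M`. -/
def matchNbrs {L R : Type*} [Fintype R] [DecidableEq L] [DecidableEq R]
    (M : Finset (L × R)) (i : L) : Finset R :=
  Finset.univ.filter fun j => (i, j) ∈ M

/-- The deficiency `def(M) = Σ_{i ∈ U} max(0, q − |N_M(i)|)` of a matching `M`
with respect to `U` and the target degree `q` (using truncated subtraction). -/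
def deficiency {L R : Type*} [Fintype R] [DecidableEq L] [DecidableEq R]
    (M : Finset (L × R)) (U : Finset L) (q : ℕ) : ℕ :=
  ∑ i ∈ U, (q - (matchNbrs M i).card)

theorem aux_path {L R : Type*} [Fintype R] [DecidableEq L] [DecidableEq R]
    (E : Finset (L × R)) (U : Finset L) (q : ℕ) (m : ℕ) :
    ∀ (M : Finset (L × R)) (v : ℕ → R) (u : ℕ → L), M ⊆ E → IsMatching M →
    (∀ i ≤ m, ∀ j ≤ m, v i = v j → i = j) →
    (∀ i ≤ m, u i ∈ U) →
    (∀ i ≤ m, (u i, v i) ∈ E ∧ (u i, v i) ∉ M) →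
    (∀ i < m, (u i, v (i + 1)) ∈ M) →
    (∀ x : L, (x, v 0) ∉ M) →
    (matchNbrs M (u m)).card < q →
    ∃ M' ⊆ E, IsMatching M' ∧ deficiency M' U q + 1 = deficiency M U q := by
  induction m with
  | zero =>
    intro M v u hME hM hv hU hE hMe hf hd
    refine ⟨insert (u 0, v 0) M, ?_, ?_, ?_⟩
    · exact Finset.insert_subset (hE 0 le_rfl).1 hME
    · intro j i i' h h'
      simp only [Finset.mem_insert, Prod.mk.injEq] at h h'
      rcases h with ⟨h1, h2⟩ | h <;> rcases h' with ⟨h3, h4⟩ | h'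
      · rw [h1, h3]
      · subst h2; exact absurd h' (hf _)
      · subst h4; exact absurd h (hf _)
      · exact hM j i i' h h'
    · unfold deficiency
      rw [← Finset.add_sum_erase U _ (hU 0 le_rfl), ← Finset.add_sum_erase U _ (hU 0 le_rfl)]
      have h1 : matchNbrs (insert (u 0, v 0) M) (u 0) = insert (v 0) (matchNbrs M (u 0)) := by
        ext j; simp [matchNbrs]
      have h2 : (matchNbrs (insert (u 0, v 0) M) (u 0)).card
          = (matchNbrs M (u 0)).card + 1 := by
        rw [h1, Finset.card_insert_of_notMem]
        simpa [matchNbrs] using hf (u 0)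
      have h3 : ∑ i ∈ U.erase (u 0), (q - (matchNbrs (insert (u 0, v 0) M) i).card)
          = ∑ i ∈ U.erase (u 0), (q - (matchNbrs M i).card) := by
        refine Finset.sum_congr rfl fun i hi => ?_
        have hne := Finset.ne_of_mem_erase hi
        have : matchNbrs (insert (u 0, v 0) M) i = matchNbrs M i := by
          ext j; simp [matchNbrs, hne]
        rw [this]
      rw [h3, h2]
      omega
  | succ m ih =>
    intro M v u hME hM hv hU hE hMe hf hd
    have hv01 : v 0 ≠ v 1 := fun h => by
      have := hv 0 (by omega) 1 (by omega) h
      omega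
    have hcard : ∀ i, (matchNbrs (insert (u 0, v 0) (M.erase (u 0, v 1))) i).card
        = (matchNbrs M i).card := by
      intro i
      by_cases hi : i = u 0
      · subst hi
        have h1 : matchNbrs (insert (u 0, v 0) (M.erase (u 0, v 1))) (u 0)
            = insert (v 0) ((matchNbrs M (u 0)).erase (v 1)) := by
          ext j; simp [matchNbrs]
        have hmem : v 1 ∈ matchNbrs M (u 0) := by
          simpa [matchNbrs] using hMe 0 (by omega)
        rw [h1, Finset.card_insert_of_notMem, Finset.card_erase_add_one hmem]
        simp [matchNbrs, hf]
      · congr 1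
        ext j; simp [matchNbrs, hi]
    have hdd : deficiency (insert (u 0, v 0) (M.erase (u 0, v 1))) U q = deficiency M U q := by
      unfold deficiency
      simp only [hcard]
    rw [← hdd]
    apply ih _ (fun i => v (i + 1)) (fun i => u (i + 1))
    · exact Finset.insert_subset (hE 0 (by omega)).1 ((Finset.erase_subset _ _).trans hME)
    · intro j i i' h h'
      simp only [Finset.mem_insert, Prod.mk.injEq, Finset.mem_erase] at h h'
      rcases h with ⟨h1, h2⟩ | h <;> rcases h' with ⟨h3, h4⟩ | h'
      · rw [h1, h3]
      · subst h2; exact absurd h'.2 (hf _)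
      · subst h4; exact absurd h.2 (hf _)
      · exact hM j i i' h.2 h'.2
    · intro i hi j hj h
      have := hv (i + 1) (by omega) (j + 1) (by omega) h
      omega
    · exact fun i hi => hU (i + 1) (by omega)
    · intro i hi
      refine ⟨(hE (i + 1) (by omega)).1, fun h => ?_⟩
      simp only [Finset.mem_insert, Prod.mk.injEq, Finset.mem_erase] at h
      rcases h with ⟨_, h⟩ | h
      · have := hv _ (by omega) _ (by omega) h
        omega
      · exact (hE (i + 1) (by omega)).2 h.2
    · intro i hi
      refine Finset.mem_insert_of_mem (Finset.mem_erase.2 ⟨fun h => ?_, hMe (i + 1) (by omega)⟩)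
      have := hv (i + 1 + 1) (by omega) 1 (by omega) (Prod.mk.inj h).2
      omega
    · intro x h
      simp only [Finset.mem_insert, Prod.mk.injEq, Finset.mem_erase, zero_add] at h
      rcases h with ⟨_, h⟩ | ⟨h1, h2⟩
      · exact hv01 h.symm
      · exact h1 (Prod.ext (hM _ _ _ h2 (hMe 0 (by omega))) rfl)
    · rw [hcard]; exact hd

/-- Alternating paths decrease matching deficiency: given a matching `M ⊆ E`
in which every vertex of `U` is incident to at most `q` edges, and an
alternating path `(v₁, u₁, …, v_m, u_m)` with distinct vertices, where each
`{v_i, u_i} ∈ E \ M`, each `{u_i, v_{i+1}} ∈ M`, `v₁` is free, and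
`def_M(u_m) > 0`, there exists a matching `M' ⊆ E` with
`def(M') = def(M) − 1`. -/
theorem alternating_path_decreases_deficiency
    {L R : Type*} [Fintype L] [Fintype R] [DecidableEq L] [DecidableEq R]
    (E : Finset (L × R)) (U : Finset L) (q : ℕ) (hq : 1 ≤ q)
    (M : Finset (L × R)) (hME : M ⊆ E) (hmatch : IsMatching M)
    (hbound : ∀ i ∈ U, (matchNbrs M i).card ≤ q)
    (m : ℕ) (hm : 0 < m) (v : Fin m → R) (u : Fin m → L)
    (hvinj : Function.Injective v) (huinj : Function.Injective u)
    (huU : ∀ i : Fin m, u i ∈ U)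
    (hEdge : ∀ i : Fin m, (u i, v i) ∈ E ∧ (u i, v i) ∉ M)
    (hMedge : ∀ (i : ℕ) (hi : i + 1 < m),
      (u ⟨i, Nat.lt_of_succ_lt hi⟩, v ⟨i + 1, hi⟩) ∈ M)
    (hfree : ∀ x : L, (x, v ⟨0, hm⟩) ∉ M)
    (hdef : (matchNbrs M (u ⟨m - 1, Nat.sub_lt hm Nat.one_pos⟩)).card < q) :
    ∃ M' ⊆ E, IsMatching M' ∧ deficiency M' U q + 1 = deficiency M U q := by
  obtain ⟨n, rfl⟩ : ∃ n, m = n + 1 := ⟨m - 1, by omega⟩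
  have key : ∀ i (hi : i ≤ n), Fin.ofNat (n + 1) i = ⟨i, Nat.lt_succ_of_le hi⟩ := by
    intro i hi
    ext
    simp only [Fin.ofNat]
    exact Nat.mod_eq_of_lt (by omega)
  apply aux_path E U q n M (fun i => v (Fin.ofNat (n + 1) i)) (fun i => u (Fin.ofNat (n + 1) i))
    hME hmatch
  · intro i hi j hj h
    have := hvinj h
    rw [key i hi, key j hj] at this
    exact Fin.mk.inj this
  · exact fun i _ => huU _
  · exact fun i _ => hEdge _
  · intro i hi
    have := hMedge i (by omega)
    simp only [key i (by omega), key (i + 1) (by omega)]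
    exact this
  · intro x
    simp only [key 0 (by omega)]
    exact hfree x
  · simp only [key n le_rfl]
    exact hdef
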